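/- arXiv:2603.04588 — 2 statements merged into one kernel-verified Lean document; each statement's English description precedes it below -/
import Mathlib

section
/- In the exterior algebra Λ described in the context, for every integer t ≥ 1 the following identity holds: (I₁ − I₂ + I₃)^{∧ t} = I₃^{∧ (t−1)} ∧ (t²·I₁ − t·I₂ + I₃), where I₂ := I₂₁ + I₂₂ + I₂₃ + I₂₄ and I₃ := I₃₁ + I₃₂. -/
set_option synthInstance.maxHeartbeats 1000000
set_option maxHeartbeats 1000000

noncomputable section

/-- The base commutative ring: polynomials over `ℂ` in the `2m` variables
`v₁, …, v_m` (encoded `(i, 0)`) and `w₁, …, w_m` (encoded `(i, 1)`, playing the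
role of the conjugates `v̄_i`). -/
abbrev PolyR (m : ℕ) := MvPolynomial (Fin m × Fin 2) ℂ

/-- The free module with basis `a_i, b_i, c_i, d_i` (encoded by `Fin m × Fin 4`,
playing the roles of `dz_i, dz̄_i, dv_i, dv̄_i`). -/
abbrev ModM (m : ℕ) := Fin m × Fin 4 → PolyR m

/-- The exterior algebra `Λ` of the free module `ModM m` over `PolyR m`. -/
abbrev Lam (m : ℕ) := ExteriorAlgebra (PolyR m) (ModM m)

/-- The basis generators: `eGen m 0 i = a_i`, `eGen m 1 i = b_i`,
`eGen m 2 i = c_i`, `eGen m 3 i = d_i`. -/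
def eGen (m : ℕ) (t : Fin 4) (i : Fin m) : Lam m :=
  ExteriorAlgebra.ι (PolyR m) (Pi.single (i, t) 1)

/-- The scalar `v_i`. -/
def vS (m : ℕ) (i : Fin m) : PolyR m := MvPolynomial.X (i, 0)

/-- The scalar `w_i` (playing the role of `v̄_i`). -/
def wS (m : ℕ) (i : Fin m) : PolyR m := MvPolynomial.X (i, 1)

/-- `I₁ = (Σ w_i a_i) ∧ (Σ v_j b_j) ∧ (Σ w_k c_k) ∧ (Σ v_l d_l)`. -/
def I1 (m : ℕ) : Lam m :=
  (∑ i, wS m i • eGen m 0 i) * (∑ j, vS m j • eGen m 1 j)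
    * (∑ k, wS m k • eGen m 2 k) * (∑ l, vS m l • eGen m 3 l)

/-- `I₂₁ = (Σ a_i ∧ b_i) ∧ (Σ w_k c_k) ∧ (Σ v_l d_l)`. -/
def I21 (m : ℕ) : Lam m :=
  (∑ i, eGen m 0 i * eGen m 1 i) * (∑ k, wS m k • eGen m 2 k) * (∑ l, vS m l • eGen m 3 l)

/-- `I₂₂ = (Σ v_j b_j) ∧ (Σ w_k c_k) ∧ (Σ a_i ∧ d_i)`. -/
def I22 (m : ℕ) : Lam m :=
  (∑ j, vS m j • eGen m 1 j) * (∑ k, wS m k • eGen m 2 k) * (∑ i, eGen m 0 i * eGen m 3 i)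

/-- `I₂₃ = (Σ w_i a_i) ∧ (Σ b_j ∧ c_j) ∧ (Σ v_l d_l)`. -/
def I23 (m : ℕ) : Lam m :=
  (∑ i, wS m i • eGen m 0 i) * (∑ j, eGen m 1 j * eGen m 2 j) * (∑ l, vS m l • eGen m 3 l)

/-- `I₂₄ = (Σ w_i a_i) ∧ (Σ v_j b_j) ∧ (Σ c_k ∧ d_k)`. -/
def I24 (m : ℕ) : Lam m :=
  (∑ i, wS m i • eGen m 0 i) * (∑ j, vS m j • eGen m 1 j) * (∑ k, eGen m 2 k * eGen m 3 k)

/-- `I₃₁ = (Σ b_i ∧ c_i) ∧ (Σ a_j ∧ d_j)`. -/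
def I31 (m : ℕ) : Lam m :=
  (∑ i, eGen m 1 i * eGen m 2 i) * (∑ j, eGen m 0 j * eGen m 3 j)

/-- `I₃₂ = (Σ a_i ∧ b_i) ∧ (Σ c_k ∧ d_k)`. -/
def I32 (m : ℕ) : Lam m :=
  (∑ i, eGen m 0 i * eGen m 1 i) * (∑ k, eGen m 2 k * eGen m 3 k)

/-- `I₂ = I₂₁ + I₂₂ + I₂₃ + I₂₄`. -/
def I2 (m : ℕ) : Lam m := I21 m + I22 m + I23 m + I24 m

/-- `I₃ = I₃₁ + I₃₂`. -/
def I3 (m : ℕ) : Lam m := I31 m + I32 m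

/-- The power formula for `x₁ - x₂ + x₃` when `x₃` commutes with `x₁` and `x₂`, the products
`x₁ * x₁`, `x₁ * x₂` and `x₂ * x₁` vanish, and `x₂ * x₂ = 2 x₃ x₁`. -/
theorem sub_add_pow_succ_of_mul_self_eq {A : Type*} [Ring A] {x₁ x₂ x₃ : A}
    (h₁₁ : x₁ * x₁ = 0) (h₁₂ : x₁ * x₂ = 0) (h₂₁ : x₂ * x₁ = 0)
    (h₂₂ : x₂ * x₂ = 2 • (x₃ * x₁)) (h₁₃ : x₁ * x₃ = x₃ * x₁) (h₂₃ : x₂ * x₃ = x₃ * x₂)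
    (n : ℕ) :
    (x₁ - x₂ + x₃) ^ (n + 1) = x₃ ^ n * (((n + 1) ^ 2) • x₁ - (n + 1) • x₂ + x₃) := by
  induction n with
  | zero => simp
  | succ n ih =>
    rw [pow_succ, ih, pow_succ x₃, mul_assoc, mul_assoc]
    congr 1
    simp only [mul_add, add_mul, mul_sub, sub_mul, smul_mul_assoc, mul_smul_comm, h₁₁, h₁₂, h₂₁,
      h₂₂, h₁₃, h₂₃, smul_zero]
    module

/-- The power formula for the quartic expressions built from four pairwise anticommuting square-zero
elements `α, β, γ, δ` and four central elements `P, Q, S, T`. -/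
theorem sub_add_pow_of_anticommute {A : Type*} [Ring A] {α β γ δ P Q S T : A}
    (hα : α * α = 0) (hβ : β * β = 0) (hγ : γ * γ = 0) (hδ : δ * δ = 0)
    (hβα : β * α = -(α * β)) (hγα : γ * α = -(α * γ)) (hδα : δ * α = -(α * δ))
    (hγβ : γ * β = -(β * γ)) (hδβ : δ * β = -(β * δ)) (hδγ : δ * γ = -(γ * δ))
    (hP : ∀ z, z * P = P * z) (hQ : ∀ z, z * Q = Q * z)
    (hS : ∀ z, z * S = S * z) (hT : ∀ z, z * T = T * z) (n : ℕ) :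
    (α * β * γ * δ - (P * γ * δ + β * γ * T + α * S * δ + α * β * Q) + (S * T + P * Q)) ^ (n + 1)
      = (S * T + P * Q) ^ n *
        (((n + 1) ^ 2) • (α * β * γ * δ)
          - (n + 1) • (P * γ * δ + β * γ * T + α * S * δ + α * β * Q) + (S * T + P * Q)) := by
  have assoc_sq {x : A} (h : x * x = 0) (z : A) : x * (x * z) = 0 := by
    rw [← mul_assoc, h, zero_mul]
  have assoc_neg {x y : A} (h : y * x = -(x * y)) (z : A) : y * (x * z) = -(x * (y * z)) := by
    rw [← mul_assoc, h, neg_mul, mul_assoc]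
  have assoc_comm {x : A} (h : ∀ z, z * x = x * z) (y z : A) : y * (x * z) = x * (y * z) := by
    rw [← mul_assoc, h, mul_assoc]
  have h₃ : ∀ z, z * (S * T + P * Q) = (S * T + P * Q) * z := fun z => by
    rw [mul_add, add_mul, assoc_comm hS, hT, assoc_comm hP, hQ, mul_assoc, mul_assoc]
  refine sub_add_pow_succ_of_mul_self_eq ?_ ?_ ?_ ?_ (h₃ _) (h₃ _) n
  all_goals
    simp only [mul_add, add_mul, mul_assoc, hβ, hγ, hδ, hγβ, hδβ, hδγ, assoc_sq hα, assoc_sq hβ,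
      assoc_sq hγ, assoc_neg hβα, assoc_neg hγα, assoc_neg hδα, assoc_neg hγβ, assoc_neg hδβ,
      assoc_neg hδγ, hQ β, hS α, hT γ, assoc_comm hP α, assoc_comm hP β, assoc_comm hP γ,
      assoc_comm hP δ, assoc_comm hQ α, assoc_comm hQ β, assoc_comm hQ γ, assoc_comm hQ δ,
      assoc_comm hS α, assoc_comm hS β, assoc_comm hS γ, assoc_comm hS δ, assoc_comm hT α,
      assoc_comm hT β, assoc_comm hT γ, assoc_comm hT δ, assoc_comm hP Q, assoc_comm hS T,
      mul_neg, neg_neg, mul_zero, add_zero, zero_add, neg_zero]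
  all_goals abel

/-- The exterior product of two vectors is central. -/
theorem ExteriorAlgebra.mul_ι_mul_ι_comm {R M : Type*} [CommRing R] [AddCommGroup M] [Module R M]
    (x y : M) (z : ExteriorAlgebra R M) :
    z * (ι R x * ι R y) = ι R x * ι R y * z := by
  induction z using ExteriorAlgebra.induction with
  | algebraMap r => exact Algebra.commutes r _
  | ι u =>
    have h (p q : M) : ι R p * ι R q = -(ι R q * ι R p) :=
      eq_neg_of_add_eq_zero_left (ι_add_mul_swap p q)
    rw [← mul_assoc, h u x, neg_mul, mul_assoc, h u y, mul_neg, neg_neg, mul_assoc]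
  | mul p q hp hq => rw [mul_assoc, hq, ← mul_assoc, hp, mul_assoc]
  | add p q hp hq => rw [add_mul, mul_add, hp, hq]

/-- The quadratic elements `Σ e_i ∧ f_i` are central. -/
theorem mul_sum_eGen_mul_eGen_comm (m : ℕ) (s t : Fin 4) (z : Lam m) :
    z * ∑ i, eGen m s i * eGen m t i = (∑ i, eGen m s i * eGen m t i) * z := by
  simp only [Finset.mul_sum, Finset.sum_mul, eGen, ExteriorAlgebra.mul_ι_mul_ι_comm]

/-- A linear combination of generators is the image of a vector. -/
theorem sum_smul_eGen_eq_ι (m : ℕ) (s : Fin 4) (r : Fin m → PolyR m) :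
    ∑ i, r i • eGen m s i
      = ExteriorAlgebra.ι (PolyR m) (∑ i, r i • (Pi.single (i, s) 1 : ModM m)) := by
  simp only [eGen, map_sum, map_smul]

theorem sum_smul_eGen_mul_self (m : ℕ) (s : Fin 4) (r : Fin m → PolyR m) :
    (∑ i, r i • eGen m s i) * ∑ i, r i • eGen m s i = 0 := by
  rw [sum_smul_eGen_eq_ι, ExteriorAlgebra.ι_sq_zero]

theorem sum_smul_eGen_mul_swap (m : ℕ) (s t : Fin 4) (r q : Fin m → PolyR m) :
    (∑ i, r i • eGen m s i) * ∑ i, q i • eGen m t i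
      = -((∑ i, q i • eGen m t i) * ∑ i, r i • eGen m s i) := by
  rw [sum_smul_eGen_eq_ι, sum_smul_eGen_eq_ι]
  exact eq_neg_of_add_eq_zero_left (ExteriorAlgebra.ι_add_mul_swap _ _)

/-- `(I₁ − I₂ + I₃)^{∧t} = I₃^{∧(t−1)} ∧ (t² I₁ − t I₂ + I₃)` for every `t ≥ 1`. -/
theorem stmt4 (m : ℕ) (hm : 1 ≤ m) (t : ℕ) (ht : 1 ≤ t) :
    (I1 m - I2 m + I3 m) ^ t
      = I3 m ^ (t - 1) * ((t ^ 2) • I1 m - t • I2 m + I3 m) := by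
  obtain ⟨n, rfl⟩ := Nat.exists_eq_add_of_le' ht
  exact sub_add_pow_of_anticommute
    (sum_smul_eGen_mul_self m 0 _) (sum_smul_eGen_mul_self m 1 _)
    (sum_smul_eGen_mul_self m 2 _) (sum_smul_eGen_mul_self m 3 _)
    (sum_smul_eGen_mul_swap m 1 0 _ _) (sum_smul_eGen_mul_swap m 2 0 _ _)
    (sum_smul_eGen_mul_swap m 3 0 _ _) (sum_smul_eGen_mul_swap m 2 1 _ _)
    (sum_smul_eGen_mul_swap m 3 1 _ _) (sum_smul_eGen_mul_swap m 3 2 _ _)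
    (mul_sum_eGen_mul_eGen_comm m 0 1) (mul_sum_eGen_mul_eGen_comm m 2 3)
    (mul_sum_eGen_mul_eGen_comm m 1 2) (mul_sum_eGen_mul_eGen_comm m 0 3) n
end
end

section
/- In the exterior algebra Λ described in the context, the following identities hold: (1) I₂₁ ∧ I₂₄ = I₁ ∧ I₃₂; (2) I₂₂ ∧ I₂₃ = I₁ ∧ I₃₁; (3) with I₂ := I₂₁ + I₂₂ + I₂₃ + I₂₄ and I₃ := I₃₁ + I₃₂, one has I₂ ∧ I₂ = 2·(I₁ ∧ I₃); and (4) I₁ ∧ I₁ = 0 and I₁ ∧ I₂ⱼ = 0 for each j ∈ {1,2,3,4} (writing I₂₁, I₂₂, I₂₃, I₂₄ for the I₂ⱼ). -/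
set_option synthInstance.maxHeartbeats 1000000
set_option maxHeartbeats 1000000

noncomputable section

section OddGenerators

variable {Z L : Type*} [CommRing Z] [Ring L] [Algebra Z L] {A B C D : L}

/-- The product identities for four anticommuting square-zero elements `A, B, C, D` and scalars
`p, q, s, t`. -/
theorem anticommuting_identities
    (hA : A * A = 0) (hB : B * B = 0) (hC : C * C = 0) (hD : D * D = 0)
    (hBA : B * A = -(A * B)) (hCA : C * A = -(A * C)) (hDA : D * A = -(A * D))
    (hCB : C * B = -(B * C)) (hDB : D * B = -(B * D)) (hDC : D * C = -(C * D))
    (p q s t : Z) :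
    (p • (C * D)) * (q • (A * B)) = (A * B * C * D) * ((p * q) • (1 : L)) ∧
    (s • (B * C)) * (t • (A * D)) = (A * B * C * D) * ((t * s) • (1 : L)) ∧
    (p • (C * D) + s • (B * C) + t • (A * D) + q • (A * B)) *
        (p • (C * D) + s • (B * C) + t • (A * D) + q • (A * B)) =
      2 • ((A * B * C * D) * ((t * s) • (1 : L) + (p * q) • (1 : L))) ∧
    ((A * B * C * D) * (A * B * C * D) = 0 ∧ (A * B * C * D) * (p • (C * D)) = 0 ∧
      (A * B * C * D) * (s • (B * C)) = 0 ∧ (A * B * C * D) * (t • (A * D)) = 0 ∧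
      (A * B * C * D) * (q • (A * B)) = 0) := by
  have zero_left {x : L} (h : x * x = 0) (y : L) : x * (x * y) = 0 := by
    rw [← mul_assoc, h, zero_mul]
  have swap_left {x y : L} (h : y * x = -(x * y)) (z : L) : y * (x * z) = -(x * (y * z)) := by
    rw [← mul_assoc, h, neg_mul, mul_assoc]
  refine ⟨?_, ?_, ?_, ?_, ?_, ?_, ?_, ?_⟩ <;>
    simp only [mul_add, add_mul, smul_mul_assoc, mul_smul_comm, mul_assoc, mul_one, smul_smul,
      hB, hC, hD, hCB, hDB, hDC, zero_left hA, zero_left hB, zero_left hC,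
      swap_left hBA, swap_left hCA, swap_left hDA, swap_left hCB, swap_left hDB,
      swap_left hDC, mul_neg, neg_neg, neg_zero, mul_zero, smul_zero, add_zero, zero_add,
      mul_comm s t, mul_comm q p]
  module

end OddGenerators

namespace ExteriorAlgebra

variable {R M : Type*} [CommRing R] [AddCommGroup M] [Module R M]

theorem ι_mul_ι_swap (x y : M) : ι R y * ι R x = -(ι R x * ι R y) :=
  eq_neg_of_add_eq_zero_left (ι_add_mul_swap y x)

theorem ι_mul_ι_mem_center (x y : M) :
    ι R x * ι R y ∈ Subring.center (ExteriorAlgebra R M) := by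
  rw [Subring.mem_center_iff]
  intro z
  induction z using ExteriorAlgebra.induction with
  | algebraMap r => exact Algebra.commutes r _
  | ι z =>
    rw [← mul_assoc, ι_mul_ι_swap x z, neg_mul, mul_assoc, ι_mul_ι_swap y z, mul_neg, neg_neg,
      mul_assoc]
  | mul a b ha hb => rw [mul_assoc, hb, ← mul_assoc, ha, mul_assoc]
  | add a b ha hb => rw [add_mul, mul_add, ha, hb]

end ExteriorAlgebra

theorem sum_eGen_mul_eGen_mem_center (m : ℕ) (s t : Fin 4) :
    ∑ i, eGen m s i * eGen m t i ∈ Subring.center (Lam m) :=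
  sum_mem fun _ _ => ExteriorAlgebra.ι_mul_ι_mem_center _ _

theorem sum_smul_eGen (m : ℕ) (t : Fin 4) (f : Fin m → PolyR m) :
    ∑ i, f i • eGen m t i =
      ExteriorAlgebra.ι (PolyR m) (∑ i, f i • (Pi.single (i, t) 1 : ModM m)) := by
  simp only [map_sum, map_smul, eGen]

/-- The identities `I₂₁ ∧ I₂₄ = I₁ ∧ I₃₂`, `I₂₂ ∧ I₂₃ = I₁ ∧ I₃₁`,
`I₂ ∧ I₂ = 2 (I₁ ∧ I₃)`, `I₁ ∧ I₁ = 0` and `I₁ ∧ I₂ⱼ = 0` for `j = 1,2,3,4`. -/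
theorem stmt5 (m : ℕ) (hm : 1 ≤ m) :
    I21 m * I24 m = I1 m * I32 m ∧
    I22 m * I23 m = I1 m * I31 m ∧
    I2 m * I2 m = 2 • (I1 m * I3 m) ∧
    (I1 m * I1 m = 0 ∧ I1 m * I21 m = 0 ∧ I1 m * I22 m = 0 ∧
      I1 m * I23 m = 0 ∧ I1 m * I24 m = 0) := by
  have key := anticommuting_identities (Z := Subring.center (Lam m))
    (ExteriorAlgebra.ι_sq_zero (R := PolyR m) (∑ i, wS m i • (Pi.single (i, 0) 1 : ModM m)))
    (ExteriorAlgebra.ι_sq_zero (R := PolyR m) (∑ i, vS m i • (Pi.single (i, 1) 1 : ModM m)))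
    (ExteriorAlgebra.ι_sq_zero (R := PolyR m) (∑ i, wS m i • (Pi.single (i, 2) 1 : ModM m)))
    (ExteriorAlgebra.ι_sq_zero (R := PolyR m) (∑ i, vS m i • (Pi.single (i, 3) 1 : ModM m)))
    (ExteriorAlgebra.ι_mul_ι_swap _ _) (ExteriorAlgebra.ι_mul_ι_swap _ _)
    (ExteriorAlgebra.ι_mul_ι_swap _ _) (ExteriorAlgebra.ι_mul_ι_swap _ _)
    (ExteriorAlgebra.ι_mul_ι_swap _ _) (ExteriorAlgebra.ι_mul_ι_swap _ _)
    ⟨_, sum_eGen_mul_eGen_mem_center m 0 1⟩ ⟨_, sum_eGen_mul_eGen_mem_center m 2 3⟩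
    ⟨_, sum_eGen_mul_eGen_mem_center m 0 3⟩ ⟨_, sum_eGen_mul_eGen_mem_center m 1 2⟩
  simp only [← sum_smul_eGen, Subring.smul_def, smul_eq_mul, Subring.coe_mul, mul_one] at key
  have h21 : I21 m = (∑ i, eGen m 0 i * eGen m 1 i) *
      ((∑ k, wS m k • eGen m 2 k) * (∑ l, vS m l • eGen m 3 l)) := mul_assoc _ _ _
  have h22 : I22 m = (∑ i, eGen m 0 i * eGen m 3 i) *
      ((∑ j, vS m j • eGen m 1 j) * (∑ k, wS m k • eGen m 2 k)) :=
    Subring.mem_center_iff.1 (sum_eGen_mul_eGen_mem_center m 0 3) _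
  have h23 : I23 m = (∑ j, eGen m 1 j * eGen m 2 j) *
      ((∑ i, wS m i • eGen m 0 i) * (∑ l, vS m l • eGen m 3 l)) := by
    rw [I23, Subring.mem_center_iff.1 (sum_eGen_mul_eGen_mem_center m 1 2), mul_assoc]
  have h24 : I24 m = (∑ k, eGen m 2 k * eGen m 3 k) *
      ((∑ i, wS m i • eGen m 0 i) * (∑ j, vS m j • eGen m 1 j)) :=
    Subring.mem_center_iff.1 (sum_eGen_mul_eGen_mem_center m 2 3) _
  rw [I2, I3, h21, h22, h23, h24]
  exact key
end
end
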